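/- Every connected finite simple graph G whose size m satisfies m ≤ n + 2, where n is its order (so G is unicyclic, bicyclic, or tricyclic, or a tree), satisfies 2·n⁺(G) ≤ n⁻(G)·(n⁻(G) + 1). -/

import Mathlib

/-!
Write `p = n⁺(G)` and `q = n⁻(G)`. They are the largest dimensions of subspaces on which the form
`xᵀ A(G) x` is positive, respectively negative, definite. The claim follows from four implications.

* `p ≥ 1` implies `q ≥ 1`: there is an edge `uv`, and `e u - e v` is a negative vector.
* `p ≥ 2` implies `q ≥ 2` (`two_le_neg`). This holds for every graph, connected or not: splitting
  off the hyperbolic plane of an edge leaves a form for which the projected coordinate vectors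
  have nonpositive self-products, so that form vanishes unless it has a negative vector.
* `p ≥ 4` implies `q ≥ 3` (`three_le_neg_of_degree`). Otherwise `q = 2`, so `n ≥ 6`, and `m ≤ n + 2`
  yields a vertex `a` of degree one or two, with neighbours `b, c`. If `c ≠ b`,
  removing `c` lowers `p` by at most one and makes `a` pendant; splitting off the pendant edge `ab`
  lowers `p` and `q` by one, and the previous point applies to `G - {a, b, c}`.
* `p ≤ q + 3` (`pos_le_neg_add`, `exists_bipartizing_set`). At most three edges lie outside a
  spanning tree; deleting an endpoint of each leaves a bipartite graph, where a sign change on one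
  colour class interchanges positive and negative vectors.

For `q ≤ 2` the first three points give `p ≤ 0, 1, 3`, and for `q ≥ 3` one has
`2 (q + 3) ≤ q (q + 1)`.
-/

open Matrix

/-- The adjacency matrix of a simple graph over `ℝ` is Hermitian. -/
theorem SimpleGraph.adjHerm {V : Type*} [Fintype V] [DecidableEq V] (G : SimpleGraph V)
    [DecidableRel G.Adj] : (G.adjMatrix ℝ).IsHermitian := by
  unfold Matrix.IsHermitian
  rw [conjTranspose_eq_transpose_of_trivial]
  exact G.isSymm_adjMatrix

/-- `n⁺(G)`: the number of positive eigenvalues of the adjacency matrix of `G`,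
counted with multiplicity. -/
noncomputable def SimpleGraph.posInertia {V : Type*} [Finite V] (G : SimpleGraph V) : ℕ :=
  letI := Fintype.ofFinite V
  letI := Classical.decEq V
  letI : DecidableRel G.Adj := Classical.decRel _
  Nat.card {v : V // 0 < G.adjHerm.eigenvalues v}

/-- `n⁻(G)`: the number of negative eigenvalues of the adjacency matrix of `G`,
counted with multiplicity. -/
noncomputable def SimpleGraph.negInertia {V : Type*} [Finite V] (G : SimpleGraph V) : ℕ :=
  letI := Fintype.ofFinite V
  letI := Classical.decEq V
  letI : DecidableRel G.Adj := Classical.decRel _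
  Nat.card {v : V // G.adjHerm.eigenvalues v < 0}

namespace SimpleGraph

/-! ### The adjacency form and its inertia -/

section Inertia

variable {V : Type*} [Fintype V] [DecidableEq V] (G : SimpleGraph V) [DecidableRel G.Adj]

/-- The symmetric bilinear form `(x, y) ↦ xᵀ A(G) y`. -/
noncomputable def form : LinearMap.BilinForm ℝ (V → ℝ) := Matrix.toBilin' (G.adjMatrix ℝ)

lemma form_symm (x y : V → ℝ) : G.form x y = G.form y x := by
  simp only [form, Matrix.toBilin'_apply]
  rw [Finset.sum_comm]
  refine Finset.sum_congr rfl fun i _ => Finset.sum_congr rfl fun j _ => ?_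
  simp only [SimpleGraph.adjMatrix_apply, G.adj_comm]
  ring

lemma form_single (i j : V) :
    G.form (Pi.single i 1) (Pi.single j 1) = G.adjMatrix ℝ i j := by
  simp [form]

lemma form_single_left (i : V) (x : V → ℝ) :
    G.form (Pi.single i 1) x = ∑ j, G.adjMatrix ℝ i j * x j := by
  rw [form, Matrix.toBilin'_apply']
  rw [single_one_dotProduct]
  rfl

/-- The form is diagonal in coordinates with respect to the orthonormal eigenbasis. -/
lemma form_self_eq (x : V → ℝ) :
    G.form x x = ∑ i, G.adjHerm.eigenvalues i *
      ((star (G.adjHerm.eigenvectorUnitary : Matrix V V ℝ)) *ᵥ x) i ^ 2 := by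
  have h := G.adjHerm.spectral_theorem
  rw [Unitary.conjStarAlgAut_apply] at h
  rw [form, Matrix.toBilin'_apply']
  conv_lhs => rw [h]
  rw [← Matrix.mulVec_mulVec, ← Matrix.mulVec_mulVec, Matrix.dotProduct_mulVec]
  simp only [dotProduct]
  refine Finset.sum_congr rfl fun i _ => ?_
  rw [Matrix.mulVec_diagonal, ← Matrix.mulVec_transpose, star_eq_conjTranspose,
    conjTranspose_eq_transpose_of_trivial]
  simp only [Function.comp, RCLike.ofReal_real_eq_id, id]
  ring

/-- Linear combinations of eigenvectors with positive eigenvalues give an `n⁺`-dimensional space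
on which the form is positive definite. -/
lemma exists_pos_map :
    ∃ f : ({v : V // 0 < G.adjHerm.eigenvalues v} → ℝ) →ₗ[ℝ] (V → ℝ),
      ∀ c, c ≠ 0 → 0 < G.form (f c) (f c) := by
  let U : Matrix V V ℝ := G.adjHerm.eigenvectorUnitary
  refine ⟨(Matrix.mulVecLin U).comp 
    (Function.ExtendByZero.linearMap ℝ Subtype.val), fun c hc => ?_⟩
  have hU : star U * U = 1 := Unitary.coe_star_mul_self _
  rw [form_self_eq]
  simp only [LinearMap.comp_apply, Matrix.mulVecLin_apply, Matrix.mulVec_mulVec]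
  change 0 < ∑ i, G.adjHerm.eigenvalues i * ((star U * U) *ᵥ _) i ^ 2
  rw [hU]
  simp only [Matrix.one_mulVec]
  have hval : ∀ v : {v : V // 0 < G.adjHerm.eigenvalues v},
      Function.extend Subtype.val c 0 v.1 = c v := fun v =>
    Subtype.val_injective.extend_apply _ _ _
  obtain ⟨v, hv⟩ := Function.ne_iff.1 hc
  refine Finset.sum_pos' (fun i _ => ?_) ⟨v.1, Finset.mem_univ _, ?_⟩
  · by_cases hi : 0 < G.adjHerm.eigenvalues i
    · positivity
    · have : Function.extend (Subtype.val : {v : V // 0 < G.adjHerm.eigenvalues v} → V) c 0 i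
          = 0 := by
        rw [Function.extend_apply']
        · rfl
        · rintro ⟨a, rfl⟩; exact hi a.2
      simp [this]
  · have := v.2
    simp only [Function.ExtendByZero.linearMap_apply, hval]
    have hv' : c v ≠ 0 := hv
    positivity

/-- A space on which the form is negative definite has dimension at most `n⁻`: its projection to
the eigenvectors with negative eigenvalues is injective. -/
lemma finrank_le_neg {E : Type*} [AddCommGroup E] [Module ℝ E] [FiniteDimensional ℝ E]
    (f : E →ₗ[ℝ] (V → ℝ)) (hf : ∀ c, c ≠ 0 → G.form (f c) (f c) < 0) :
    Module.finrank ℝ E ≤ Nat.card {v : V // G.adjHerm.eigenvalues v < 0} := by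
  let U : Matrix V V ℝ := G.adjHerm.eigenvectorUnitary
  let g : E →ₗ[ℝ] ({v : V // G.adjHerm.eigenvalues v < 0} → ℝ) :=
    LinearMap.funLeft ℝ ℝ Subtype.val ∘ₗ Matrix.mulVecLin (star U) ∘ₗ f
  have hg : Function.Injective g := by
    rw [← LinearMap.ker_eq_bot, LinearMap.ker_eq_bot']
    intro c hc
    by_contra hne
    have hlt := hf c hne
    rw [form_self_eq] at hlt
    refine absurd hlt (not_lt.2 (Finset.sum_nonneg fun i _ => ?_))
    by_cases hi : G.adjHerm.eigenvalues i < 0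
    · have : (star U *ᵥ f c) i = 0 := congrFun hc ⟨i, hi⟩
      change 0 ≤ _ * (star U *ᵥ f c) i ^ 2
      simp [this]
    · exact mul_nonneg (not_lt.1 hi) (sq_nonneg _)
  have := LinearMap.finrank_le_finrank_of_injective hg
  rwa [Module.finrank_fintype_fun_eq_card, ← Nat.card_eq_fintype_card] at this

lemma le_neg_of_orthogonal {k : ℕ} (y : Fin k → V → ℝ) (hneg : ∀ i, G.form (y i) (y i) < 0)
    (horth : ∀ i j, i ≠ j → G.form (y i) (y j) = 0) :
    k ≤ Nat.card {v : V // G.adjHerm.eigenvalues v < 0} := by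
  have := G.finrank_le_neg (Fintype.linearCombination ℝ y) (fun c hc => ?_)
  · simpa using this
  · have hform : G.form (Fintype.linearCombination ℝ y c) (Fintype.linearCombination ℝ y c)
        = ∑ i, c i ^ 2 * G.form (y i) (y i) := by
      simp only [Fintype.linearCombination_apply, map_sum, LinearMap.sum_apply, map_smul,
        LinearMap.smul_apply, smul_eq_mul]
      refine Finset.sum_congr rfl fun i _ => ?_
      rw [Finset.sum_eq_single i (fun j _ hj => by rw [horth j i hj]; simp) (by simp)]
      ring
    rw [hform]
    obtain ⟨v, hv⟩ := Function.ne_iff.1 hc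
    have hv' : c v ≠ 0 := hv
    refine Finset.sum_neg' (fun i _ => ?_) ⟨v, Finset.mem_univ _, ?_⟩
    · exact mul_nonpos_of_nonneg_of_nonpos (sq_nonneg _) (hneg i).le
    · exact mul_neg_of_pos_of_neg (by positivity) (hneg v)

/-- Fewer than `n⁺` linear conditions leave a vector on which the form is positive. -/
lemma exists_pos_of_lt {k : ℕ} (φ : (V → ℝ) →ₗ[ℝ] (Fin k → ℝ))
    (hk : k < Nat.card {v : V // 0 < G.adjHerm.eigenvalues v}) :
    ∃ x, φ x = 0 ∧ 0 < G.form x x := by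
  obtain ⟨f, hf⟩ := G.exists_pos_map
  have hker : LinearMap.ker (φ ∘ₗ f) ≠ ⊥ := by
    apply LinearMap.ker_ne_bot_of_finrank_lt
    simpa [Nat.card_eq_fintype_card] using hk
  obtain ⟨c, hc, hne⟩ := Submodule.exists_mem_ne_zero_of_ne_bot hker
  exact ⟨f c, hc, hf c hne⟩

/-! ### Bounds for `n⁺` when `n⁻ ≤ 2` -/

/-- On the space of vectors supported in `S`, either the form has two orthogonal negative vectors,
or it is nonpositive on the kernel of one linear functional. Applied to an induced subgraph, this
says that `n⁻ ≤ 1` forces `n⁺ ≤ 1`.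

If `uv` is an edge inside `S`, the span of `e u, e v` is a hyperbolic plane, and `e u - e v` is
negative. In the absence of a second negative vector the form is positive semidefinite on the
orthogonal complement of that plane; the projections of the coordinate vectors have nonpositive
self-products, so the form vanishes there, and the form is nonpositive on `(e v)ᗮ`. -/
lemma two_neg_or_functional (S : Set V) :
    (∃ y₁ y₂ : V → ℝ, (∀ i ∉ S, y₁ i = 0) ∧ (∀ i ∉ S, y₂ i = 0) ∧ G.form y₁ y₁ < 0 ∧
      G.form y₂ y₂ < 0 ∧ G.form y₁ y₂ = 0) ∨
    ∃ φ : (V → ℝ) →ₗ[ℝ] ℝ, ∀ x : V → ℝ, (∀ i ∉ S, x i = 0) → φ x = 0 → G.form x x ≤ 0 := by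
  rw [or_iff_not_imp_left]
  intro hno
  have hsupp : ∀ u ∈ S, ∀ i ∉ S, (Pi.single u 1 : V → ℝ) i = 0 := by
    intro u hu i hi
    rw [Pi.single_eq_of_ne]
    rintro rfl
    exact hi hu
  have hexp : ∀ x : V → ℝ, x = ∑ i, x i • (Pi.single i 1 : V → ℝ) := by
    intro x
    ext j
    simp [Finset.sum_apply, Pi.single_apply]
  by_cases hedge : ∃ u ∈ S, ∃ v ∈ S, G.Adj u v
  · obtain ⟨u, hu, v, hv, huv⟩ := hedge
    let e : V → V → ℝ := fun i => Pi.single i 1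
    have he : ∀ i j, G.form (e i) (e j) = G.adjMatrix ℝ i j := G.form_single
    have ha : ∀ i j, G.adjMatrix ℝ i j = G.adjMatrix ℝ j i := by
      intro i j; simp [G.adj_comm]
    have haa : ∀ i, G.adjMatrix ℝ i i = 0 := by intro i; simp
    have huv1 : G.adjMatrix ℝ u v = 1 := by simp [huv]
    have hvu1 : G.adjMatrix ℝ v u = 1 := by simp [huv.symm]
    have hnn : ∀ i j, 0 ≤ G.adjMatrix ℝ i j := by
      intro i j; rw [SimpleGraph.adjMatrix_apply]; split_ifs <;> norm_num
    -- The projection of `e i` onto the orthogonal complement of the hyperbolic plane `⟨e u, e v⟩`.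
    let w : V → V → ℝ := fun i => e i - G.adjMatrix ℝ i v • e u - G.adjMatrix ℝ i u • e v
    have hww : ∀ i j, G.form (w i) (w j) = G.adjMatrix ℝ i j
        - G.adjMatrix ℝ i u * G.adjMatrix ℝ j v - G.adjMatrix ℝ i v * G.adjMatrix ℝ j u := by
      intro i j
      simp only [w, map_sub, map_smul, LinearMap.sub_apply, LinearMap.smul_apply, he, smul_eq_mul,
        haa, huv1, hvu1, ha u j, ha v j]
      ring
    have hzz : G.form (e u - e v) (e u - e v) < 0 := by
      simp only [map_sub, LinearMap.sub_apply, he, haa, huv1, hvu1]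
      norm_num
    have hzw : ∀ i, G.form (e u - e v) (w i) = 0 := by
      intro i
      simp only [w, map_sub, map_smul, LinearMap.sub_apply, he, smul_eq_mul,
        haa, huv1, hvu1, ha u i, ha v i]
      ring
    have hzS : ∀ i ∉ S, (e u - e v) i = 0 := by
      intro i hi
      simp [e, hsupp u hu i hi, hsupp v hv i hi]
    have hwS : ∀ j ∈ S, ∀ i ∉ S, w j i = 0 := by
      intro j hj i hi
      simp only [w, e, Pi.sub_apply, Pi.smul_apply, hsupp u hu i hi, hsupp v hv i hi,
        hsupp j hj i hi, smul_zero, sub_zero]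
    have hnotneg : ∀ y : V → ℝ, (∀ i ∉ S, y i = 0) → G.form (e u - e v) y = 0 →
        0 ≤ G.form y y := by
      intro y hy hzy
      by_contra hlt
      exact hno ⟨e u - e v, y, hzS, hy, hzz, not_le.1 hlt, hzy⟩
    have hself : ∀ i ∈ S, G.form (w i) (w i) = 0 := by
      intro i hi
      refine le_antisymm ?_ (hnotneg _ (hwS i hi) (hzw i))
      rw [hww, haa]
      nlinarith [mul_nonneg (hnn i u) (hnn i v)]
    have hw0 : ∀ i ∈ S, ∀ j ∈ S, G.form (w i) (w j) = 0 := by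
      intro i hi j hj
      have h := hnotneg (w i - G.form (w i) (w j) • w j)
        (fun k hk => by simp [hwS i hi k hk, hwS j hj k hk])
        (by rw [map_sub, map_smul, hzw, hzw, smul_zero, sub_zero])
      simp only [map_sub, map_smul, LinearMap.sub_apply, LinearMap.smul_apply, smul_eq_mul,
        hself i hi, hself j hj, G.form_symm (w j) (w i)] at h
      nlinarith [sq_nonneg (G.form (w i) (w j))]
    refine ⟨G.form (e v), fun x hx hvx => ?_⟩
    have hsum : ∑ i, x i • w i = x - G.form (e u) x • e v := by
      have h1 : ∀ t, ∑ i, x i * G.adjMatrix ℝ i t = G.form (e t) x := by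
        intro t
        rw [G.form_single_left]
        exact Finset.sum_congr rfl fun i _ => by rw [ha i t]; ring
      simp only [w, smul_sub, Finset.sum_sub_distrib, smul_smul, ← Finset.sum_smul, h1, hvx]
      rw [← hexp x]
      simp
    have hzero : G.form (∑ i, x i • w i) (∑ i, x i • w i) = 0 := by
      simp only [map_sum, LinearMap.sum_apply, map_smul, LinearMap.smul_apply, smul_eq_mul]
      refine Finset.sum_eq_zero fun i _ => ?_
      by_cases hi : i ∈ S
      · rw [Finset.sum_eq_zero, mul_zero]
        intro j _
        by_cases hj : j ∈ S
        · rw [hw0 j hj i hi, mul_zero]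
        · rw [hx j hj, zero_mul]
      · rw [hx i hi, zero_mul]
    rw [hsum] at hzero
    simp only [map_sub, map_smul, LinearMap.sub_apply, LinearMap.smul_apply, smul_eq_mul,
      G.form_symm x (e v), hvx, he, haa] at hzero
    linarith
  · refine ⟨0, fun x hx _ => le_of_eq ?_⟩
    simp only [form, Matrix.toBilin'_apply]
    refine Finset.sum_eq_zero fun i _ => Finset.sum_eq_zero fun j _ => ?_
    by_cases hi : i ∈ S
    · by_cases hj : j ∈ S
      · have : ¬ G.Adj i j := fun h => hedge ⟨i, hi, j, hj, h⟩
        simp [this]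
      · simp [hx j hj]
    · simp [hx i hi]

lemma one_le_neg (h : 1 ≤ Nat.card {v : V // 0 < G.adjHerm.eigenvalues v}) :
    1 ≤ Nat.card {v : V // G.adjHerm.eigenvalues v < 0} := by
  obtain ⟨x, -, hx⟩ := G.exists_pos_of_lt (k := 0) 0 h
  have hedge : ∃ u v, G.Adj u v := by
    by_contra! hcon
    refine absurd hx (le_of_eq ?_).not_gt
    simp [form, Matrix.toBilin'_apply, hcon]
  obtain ⟨u, v, huv⟩ := hedge
  refine G.le_neg_of_orthogonal (k := 1) (fun _ => Pi.single u 1 - Pi.single v 1) (fun _ => ?_)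
    (fun i j hij => absurd (Subsingleton.elim i j) hij)
  simp [form_single, huv, huv.symm]

lemma two_le_neg (h : 2 ≤ Nat.card {v : V // 0 < G.adjHerm.eigenvalues v}) :
    2 ≤ Nat.card {v : V // G.adjHerm.eigenvalues v < 0} := by
  rcases G.two_neg_or_functional Set.univ with ⟨y₁, y₂, -, -, h₁, h₂, h₁₂⟩ | ⟨φ, hφ⟩
  · refine G.le_neg_of_orthogonal ![y₁, y₂] ?_ ?_
    · simp [Fin.forall_fin_two, h₁, h₂]
    · simp [Fin.forall_fin_two, h₁₂, G.form_symm y₂ y₁]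
  · obtain ⟨x, hx, hpos⟩ := G.exists_pos_of_lt (k := 1) (LinearMap.pi fun _ => φ) h
    exact absurd (hφ x (by simp) (congrFun hx 0)) hpos.not_ge

/-- If the neighbours of `a` are `b` and `c` (possibly equal), then `n⁺ ≥ 4` forces `n⁻ ≥ 3`.
Deleting `a, b, c` costs at most two positive dimensions, so what remains has two orthogonal
negative vectors by `two_neg_or_functional`; the edge `ab` supplies a third one. -/
lemma three_le_neg_of_degree {a b c : V} (hab : G.Adj a b) (hac : G.Adj a c)
    (hdeg : ∀ x, G.Adj a x → x = b ∨ x = c)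
    (h : 4 ≤ Nat.card {v : V // 0 < G.adjHerm.eigenvalues v}) :
    3 ≤ Nat.card {v : V // G.adjHerm.eigenvalues v < 0} := by
  have hea : ∀ y : V → ℝ, y b = 0 → y c = 0 → G.form (Pi.single a 1) y = 0 := by
    intro y hb hc
    rw [form_single_left]
    refine Finset.sum_eq_zero fun j _ => ?_
    by_cases hj : G.Adj a j
    · rcases hdeg j hj with rfl | rfl
      · simp [hb]
      · simp [hc]
    · simp [hj]
  have haa : G.form (Pi.single a 1) (Pi.single a 1) = 0 := by simp [form_single]
  have hbb : G.form (Pi.single b 1) (Pi.single b 1) = 0 := by simp [form_single]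
  have hab1 : G.form (Pi.single a 1) (Pi.single b 1) = 1 := by simp [form_single, hab]
  have hba1 : G.form (Pi.single b 1) (Pi.single a 1) = 1 := by simp [form_single, hab.symm]
  rcases G.two_neg_or_functional {x | x ≠ a ∧ x ≠ b ∧ x ≠ c} with
    ⟨y₁, y₂, s₁, s₂, h₁, h₂, h₁₂⟩ | ⟨φ, hφ⟩
  · have hE₁ := hea y₁ (s₁ b (by simp)) (s₁ c (by simp))
    have hE₂ := hea y₂ (s₂ b (by simp)) (s₂ c (by simp))
    -- Correcting `y` by a multiple of `e a` makes it orthogonal to `e a` and `e b`.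
    let t : (V → ℝ) → V → ℝ := fun y => y - G.form (Pi.single b 1) y • Pi.single a 1
    refine G.le_neg_of_orthogonal ![t y₁, t y₂, Pi.single a 1 - Pi.single b 1] ?_ ?_
    · intro i
      fin_cases i <;>
      simp [t, haa, hbb, hab1, hba1, hE₁, hE₂, h₁, h₂, G.form_symm y₁ (Pi.single a 1),
        G.form_symm y₂ (Pi.single a 1)]
    · intro i j hij
      fin_cases i <;> fin_cases j <;>
      simp [t, haa, hab1, hba1, hE₁, hE₂, h₁₂, G.form_symm y₂ y₁,
        G.form_symm y₁ (Pi.single a 1), G.form_symm y₁ (Pi.single b 1),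
        G.form_symm y₂ (Pi.single a 1), G.form_symm y₂ (Pi.single b 1)] at hij ⊢
  · let ψ : (V → ℝ) →ₗ[ℝ] ℝ :=
      φ - φ (Pi.single a 1) • (LinearMap.proj a : (V → ℝ) →ₗ[ℝ] ℝ)
    obtain ⟨x, hx, hpos⟩ := G.exists_pos_of_lt (k := 3)
      (LinearMap.pi ![LinearMap.proj b, LinearMap.proj c, ψ]) h
    have hxb : x b = 0 := congrFun hx 0
    have hxc : x c = 0 := congrFun hx 1
    have hxψ : ψ x = 0 := congrFun hx 2
    have hxa := hea x hxb hxc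
    have := hφ (x - x a • Pi.single a 1) (fun i hi => ?_) ?_
    · simp [hxa, haa, G.form_symm x (Pi.single a 1)] at this
      linarith
    · by_cases hia : i = a
      · simp [hia]
      · have hi' : i = b ∨ i = c := by
          by_contra! hcon
          exact hi ⟨hia, hcon⟩
        rcases hi' with rfl | rfl
        · simp [hxb, hia]
        · simp [hxc, hia]
    · simp only [ψ, LinearMap.sub_apply, LinearMap.smul_apply, LinearMap.proj_apply,
        smul_eq_mul] at hxψ
      simp only [map_sub, map_smul, smul_eq_mul]
      linarith

/-! ### Deleting vertices to reach a bipartite graph -/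

/-- If deleting `S` leaves a bipartite graph, then `n⁺ ≤ n⁻ + |S|`: on vectors vanishing on `S`,
changing the sign of the coordinates in one colour class negates the form. -/
lemma pos_le_neg_add (S : Finset V) (col : V → Fin 2)
    (hcol : ∀ u v, u ∉ S → v ∉ S → G.Adj u v → col u ≠ col v) :
    Nat.card {v : V // 0 < G.adjHerm.eigenvalues v} ≤
      Nat.card {v : V // G.adjHerm.eigenvalues v < 0} + S.card := by
  obtain ⟨f, hf⟩ := G.exists_pos_map
  let r : (V → ℝ) →ₗ[ℝ] (S → ℝ) := LinearMap.funLeft ℝ ℝ Subtype.val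
  let σ : V → ℝ := fun v => if col v = 0 then 1 else -1
  have hneg : ∀ x : V → ℝ, r x = 0 → G.form (σ * x) (σ * x) = - G.form x x := by
    intro x hx
    have hx0 : ∀ s ∈ S, x s = 0 := fun s hs => congrFun hx ⟨s, hs⟩
    simp only [form, Matrix.toBilin'_apply, ← Finset.sum_neg_distrib]
    refine Finset.sum_congr rfl fun i _ => Finset.sum_congr rfl fun j _ => ?_
    by_cases hi : i ∈ S
    · simp [hx0 i hi]
    by_cases hj : j ∈ S
    · simp [hx0 j hj]
    by_cases hij : G.Adj i j
    · have hs : σ i * σ j = -1 := by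
        have := hcol i j hi hj hij
        simp only [σ]
        split_ifs <;> first | omega | norm_num
      simp only [Pi.mul_apply]
      linear_combination (x i * x j * G.adjMatrix ℝ i j) * hs
    · simp [hij]
  have h1 := G.finrank_le_neg
    (LinearMap.mulLeft ℝ σ ∘ₗ f ∘ₗ (LinearMap.ker (r ∘ₗ f)).subtype) (fun c hc => ?_)
  · have h2 := LinearMap.finrank_range_add_finrank_ker (r ∘ₗ f)
    have h3 := Submodule.finrank_le (LinearMap.range (r ∘ₗ f))
    simp only [Module.finrank_fintype_fun_eq_card, ← Nat.card_eq_fintype_card] at h2 h3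
    have h4 : Nat.card S = S.card := by simp
    omega
  · have := hneg (f c) c.2
    have hpos := hf c (by simpa using hc)
    simp only [LinearMap.comp_apply, LinearMap.mulLeft_apply, Submodule.subtype_apply]
    linarith

lemma card_pos_add_card_neg_le :
    Nat.card {v : V // 0 < G.adjHerm.eigenvalues v} +
      Nat.card {v : V // G.adjHerm.eigenvalues v < 0} ≤ Fintype.card V := by
  classical
  rw [Nat.card_eq_fintype_card, Nat.card_eq_fintype_card, Fintype.card_subtype,
    Fintype.card_subtype, ← Finset.card_union_of_disjoint]
  · exact Finset.card_le_univ _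
  · rw [Finset.disjoint_filter]
    intro v _ h
    exact h.not_gt

end Inertia

/-- Deleting an endpoint of each edge outside a spanning tree makes the graph bipartite; there are
at most `n + 2 - (n - 1) = 3` such edges. -/
lemma exists_bipartizing_set {V : Type*} [Fintype V] [DecidableEq V] (G : SimpleGraph V)
    [DecidableRel G.Adj] (hconn : G.Connected)
    (hsize : G.edgeFinset.card ≤ Fintype.card V + 2) :
    ∃ (S : Finset V) (col : V → Fin 2), S.card ≤ 3 ∧
      ∀ u v, u ∉ S → v ∉ S → G.Adj u v → col u ≠ col v := by
  classical
  obtain ⟨T, hTG, hT⟩ := hconn.exists_isTree_le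
  have hcard := hT.card_edgeFinset
  refine ⟨(G.edgeFinset \ T.edgeFinset).image fun e => e.out.1, hT.coloringTwo, ?_, ?_⟩
  · refine Finset.card_image_le.trans ?_
    rw [Finset.card_sdiff_of_subset (by simpa using hTG)]
    omega
  · intro u v hu hv huv
    by_cases hTuv : T.Adj u v
    · exact hT.coloringTwo.valid hTuv
    · exfalso
      have hmem : (s(u, v)).out.1 ∈ (G.edgeFinset \ T.edgeFinset).image fun e => e.out.1 :=
        Finset.mem_image_of_mem _ (by simp [huv, hTuv])
      rcases Sym2.mem_iff.1 (Sym2.out_fst_mem s(u, v)) with h | h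
      · exact hu (h ▸ hmem)
      · exact hv (h ▸ hmem)

end SimpleGraph

theorem stmt18 {V : Type*} [Finite V] (G : SimpleGraph V) (hconn : G.Connected)
    (hsize : Nat.card G.edgeSet ≤ Nat.card V + 2) :
    2 * G.posInertia ≤ G.negInertia * (G.negInertia + 1) := by
  let := Fintype.ofFinite V
  let := Classical.decEq V
  let : DecidableRel G.Adj := Classical.decRel _
  have hp : G.posInertia = Nat.card {v : V // 0 < G.adjHerm.eigenvalues v} := rfl
  have hq : G.negInertia = Nat.card {v : V // G.adjHerm.eigenvalues v < 0} := rfl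
  have hm : G.edgeFinset.card ≤ Fintype.card V + 2 := by
    rwa [SimpleGraph.edgeFinset_card, ← Nat.card_eq_fintype_card, ← Nat.card_eq_fintype_card]
  have h1 := G.one_le_neg
  have h2 := G.two_le_neg
  have hsum := G.card_pos_add_card_neg_le
  obtain ⟨S, col, hS, hcol⟩ := G.exists_bipartizing_set hconn hm
  have h3 := G.pos_le_neg_add S col hcol
  have h4 : 4 ≤ Nat.card {v : V // 0 < G.adjHerm.eigenvalues v} →
      3 ≤ Nat.card {v : V // G.adjHerm.eigenvalues v < 0} := by
    intro hp4
    have hq2 := h2 (by omega)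
    have hlow : ∃ a, G.degree a ≤ 2 := by
      by_contra! hcon
      have hdeg : ∑ _v : V, 3 ≤ ∑ v, G.degree v := Finset.sum_le_sum fun v _ => hcon v
      rw [G.sum_degrees_eq_twice_card_edges] at hdeg
      simp at hdeg
      -- `3 n ≤ 2 m ≤ 2 (n + 2)` gives `n ≤ 4`, against `n ≥ n⁺ + n⁻ ≥ 6`.
      omega
    obtain ⟨a, ha⟩ := hlow
    have : Nontrivial V := Fintype.one_lt_card_iff_nontrivial.1 (by omega)
    have hapos : 0 < G.degree a := hconn.preconnected.degree_pos_of_nontrivial a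
    have hbc : ∃ b c, G.neighborFinset a = {b, c} := by
      rw [← G.card_neighborFinset_eq_degree] at ha hapos
      obtain h | h : (G.neighborFinset a).card = 1 ∨ (G.neighborFinset a).card = 2 := by omega
      · obtain ⟨b, hb⟩ := Finset.card_eq_one.1 h
        exact ⟨b, b, by simp [hb]⟩
      · obtain ⟨b, c, -, hb⟩ := Finset.card_eq_two.1 h
        exact ⟨b, c, hb⟩
    obtain ⟨b, c, hbc⟩ := hbc
    have hadj : ∀ x, G.Adj a x ↔ x = b ∨ x = c := by
      intro x
      rw [← SimpleGraph.mem_neighborFinset, hbc]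
      simp
    exact G.three_le_neg_of_degree ((hadj b).2 (Or.inl rfl)) ((hadj c).2 (Or.inr rfl))
      (fun x => (hadj x).1) hp4
  rw [hp, hq]
  generalize Nat.card {v : V // 0 < G.adjHerm.eigenvalues v} = p at *
  generalize Nat.card {v : V // G.adjHerm.eigenvalues v < 0} = q at *
  obtain hq0 | hq1 | hq2 | hq3 : q = 0 ∨ q = 1 ∨ q = 2 ∨ 3 ≤ q := by omega
  · subst hq0; omega
  · subst hq1; omega
  · subst hq2; omega
  · -- Here `2 * p ≤ 2 * (q + 3) ≤ q * (q + 1)`, since `(q - 3) * (q + 2) ≥ 0`.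
    nlinarith
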